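/- Let τ > 0, ξ ∈ ℝ with |ξ| < 1, and let N : [0,τ] → ℝ be continuous, and define Δ(s) = 1 − ξ e^{−sτ} − ∫₀^τ N(ν) e^{−sν} dν, M(ω) = Re(Δ(iω)) and S(ω) = Im(Δ(iω)). Assume that Δ has no roots on the imaginary axis, and let ρ₁ ≥ … ≥ ρ_m > 0 be the positive zeros of M repeated according to multiplicity, with Γ = Σ_{j=1}^m (−1)^{j−1} sign(S(ρ_j)). Then Δ has no root s with Re s ≥ 0 if and only if ∫₀^τ N(ν) dν < 1 − ξ and Γ = 0. -/

import Mathlib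

/-!
The number `n` of zeros of `Δ` in the right half-plane, counted with multiplicity, equals `Γ`; the
theorem follows from this identity.

The function `Δ` is entire, and since `|ξ| < 1` and the integral term tends to `0` uniformly in the
closed right half-plane (`laplace_small`), `Re Δ > 0` there once `‖s‖ ≥ R`. Thus `Δ` has finitely
many zeros in the half-plane, and `Δ s = ∏ (s - z) ^ k z * g s` with `g` zero-free in it
(`exists_factor_finset`). The cofactor `g` has a continuous logarithm on the half-plane. Comparing
logarithms along the arc `‖s‖ = R` and along the imaginary axis yields a continuous logarithm `l` of
`ω ↦ Δ (iω)` that is principal at `R` and exceeds the principal value at `-R` by `2πi n`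
(`exists_axis_log`). As `N` and `ξ` are real, `Δ (-iω)` is the conjugate of `Δ (iω)`, which forces
`Im (l 0) = πn`.

It remains to compute the variation of the argument `θ = Im l` on `[0, R]` from the zeros of
`M = Re Δ` (`crossing_count`). For `ω` outside the zeros, let `e ω` be the parity sign of the number
of `ρ j > ω` and `G ω` the sum of `(-1) ^ j * sign (S (ρ j))` over those `j` (indexed from `0`). Going
left from `R`, the sign of `M` is `e`, and `θ` stays within `π / 2` of `π G`. Near `0`
the value of `G` is `Γ` and `θ` is close to `πn`, so `|πn - πΓ| < π`, and `Γ = n` as both are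
integers.

If there are no zeros then `n = 0`, so `Γ = 0`, and `θ 0 = 0` gives `M 0 = 1 - ξ - ∫ N > 0`.
Conversely `Γ = 0` gives `n = 0`.
-/

open MeasureTheory Complex Real

/-- The order (multiplicity) of `x` as a zero of the (analytic) function `f`: the
smallest `k` such that the `k`-th derivative of `f` at `x` does not vanish. -/
noncomputable def zeroOrder {𝕜 : Type*} [NontriviallyNormedField 𝕜] (f : 𝕜 → 𝕜) (x : 𝕜) : ℕ :=
  sInf {k : ℕ | iteratedDeriv k f x ≠ 0}

open Filter Topology Set

/-! ### Zeros and logarithms -/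

/-- Two continuous logarithms of the same function on a connected set differ by a constant: the
difference `w` takes values in the discrete set `2πiℤ`. -/
theorem eq_of_exp_eq_one {s : Set ℝ} (hs : IsPreconnected s) {w : ℝ → ℂ}
    (hw : ContinuousOn w s) (h1 : ∀ x ∈ s, Complex.exp (w x) = 1) {a b : ℝ} (ha : a ∈ s)
    (hb : b ∈ s) : w a = w b := by
  have hinteg : ∀ x ∈ s, ∃ n : ℤ, w x = n * (2 * π * I) := fun x hx =>
    Complex.exp_eq_one_iff.1 (h1 x hx)
  set φ : ℝ → ℝ := fun x => (w x).im / (2 * π) with hφ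
  have hφc : ContinuousOn φ s := (Complex.continuous_im.comp_continuousOn hw).div_const _
  have hφint : ∀ x ∈ s, ∀ n : ℤ, w x = n * (2 * π * I) → φ x = n := by
    intro x hx n hn
    simp only [hφ, hn]
    have : ((n : ℂ) * (2 * π * I)).im = n * (2 * π) := by simp
    rw [this]
    field_simp
  have hoc := (hs.image φ hφc).ordConnected
  obtain ⟨p, hp⟩ := hinteg a ha
  obtain ⟨q, hq⟩ := hinteg b hb
  have key : ∀ x ∈ s, ∀ y ∈ s, ∀ p q : ℤ, φ x = p → φ y = q → ¬ p < q := by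
    intro x hx y hy p q hp hq hpq
    have hpq' : (p : ℝ) + 1 ≤ q := by exact_mod_cast hpq
    have hmem : (p : ℝ) + 1 / 2 ∈ Set.image φ s :=
      hoc.out ⟨x, hx, hp⟩ ⟨y, hy, hq⟩ ⟨by linarith, by linarith⟩
    obtain ⟨z, hz, hz'⟩ := hmem
    obtain ⟨n, hn⟩ := hinteg z hz
    rw [hφint z hz n hn] at hz'
    have h2 : ((2 * n : ℤ) : ℝ) = ((2 * p + 1 : ℤ) : ℝ) := by push_cast; linarith
    have h3 : 2 * n = 2 * p + 1 := by exact_mod_cast h2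
    omega
  have e1 := key a ha b hb p q (hφint a ha p hp) (hφint b hb q hq)
  have e2 := key b hb a ha q p (hφint b hb q hq) (hφint a ha p hp)
  have : p = q := le_antisymm (not_lt.1 e2) (not_lt.1 e1)
  rw [hp, hq, this]

/-- An entire function of order `n` at `z` is `(s - z) ^ n` times an entire function that does not
vanish at `z`. The factorization is global, unlike the one provided by `analyticOrderAt`. -/
theorem exists_pow_mul {f : ℂ → ℂ} (z : ℂ) (n : ℕ) (hf : Differentiable ℂ f)
    (hn : analyticOrderAt f z = n) :
    ∃ g : ℂ → ℂ, Differentiable ℂ g ∧ g z ≠ 0 ∧ ∀ s, f s = (s - z) ^ n * g s := by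
  induction n generalizing f with
  | zero =>
    refine ⟨f, hf, ?_, by simp⟩
    exact (hf.analyticAt z).analyticOrderAt_eq_zero.1 (by simpa using hn)
  | succ n ih =>
    have hfz : f z = 0 := by
      by_contra h
      have := (hf.analyticAt z).analyticOrderAt_eq_zero.2 h
      rw [hn] at this
      exact absurd this (by exact_mod_cast Nat.succ_ne_zero n)
    have hd : Differentiable ℂ (dslope f z) := by
      rw [← differentiableOn_univ]
      exact (Complex.differentiableOn_dslope univ_mem).2 hf.differentiableOn
    have hfac : ∀ s, f s = (s - z) * dslope f z s := by
      intro s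
      have := sub_smul_dslope f z s
      rw [hfz, sub_zero, smul_eq_mul] at this
      exact this.symm
    have hord : analyticOrderAt (dslope f z) z = n := by
      have h1 : analyticOrderAt f z
          = analyticOrderAt (fun s : ℂ => s - z) z + analyticOrderAt (dslope f z) z := by
        rw [← analyticOrderAt_mul (by fun_prop) (hd.analyticAt z)]
        congr 1
        funext s
        exact hfac s
      have h2 : analyticOrderAt (fun s : ℂ => s - z) z = ((1 : ℕ) : ℕ∞) := by
        rw [AnalyticAt.analyticOrderAt_eq_natCast (by fun_prop)]
        exact ⟨fun _ => 1, by fun_prop, by simp, by simp⟩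
      rw [hn, h2] at h1
      push_cast at h1
      generalize analyticOrderAt (dslope f z) z = x at h1 ⊢
      induction x using ENat.recTopCoe with
      | top => simp at h1
      | coe x => norm_cast at h1 ⊢; omega
    obtain ⟨g, hg, hgz, hgf⟩ := ih hd hord
    refine ⟨g, hg, hgz, fun s => ?_⟩
    rw [hfac s, hgf s]
    ring

theorem analyticOrderAt_ne_top_of_entire {f : ℂ → ℂ} (hf : Differentiable ℂ f) {x₀ : ℂ}
    (hx₀ : f x₀ ≠ 0) (z : ℂ) : analyticOrderAt f z ≠ ⊤ := by
  intro h
  rw [analyticOrderAt_eq_top] at h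
  have han : AnalyticOnNhd ℂ f univ := fun x _ => hf.analyticAt x
  exact hx₀ (han.eqOn_zero_of_preconnected_of_eventuallyEq_zero isPreconnected_univ
    (mem_univ z) h (mem_univ x₀))

/-- All zeros of an entire function lying in a finite set `T` can be split off, with multiplicities
`k`, leaving an entire cofactor without zeros in `T`. -/
theorem exists_factor_finset (T : Finset ℂ) {f : ℂ → ℂ} (hf : Differentiable ℂ f) {x₀ : ℂ}
    (hx₀ : f x₀ ≠ 0) :
    ∃ (k : ℂ → ℕ) (g : ℂ → ℂ), Differentiable ℂ g ∧ (∀ z ∈ T, g z ≠ 0) ∧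
      ∀ s, f s = (∏ z ∈ T, (s - z) ^ k z) * g s := by
  classical
  induction T using Finset.induction_on with
  | empty => exact ⟨fun _ => 0, f, hf, by simp, by simp⟩
  | insert a T ha ih =>
    obtain ⟨k, g, hg, hgT, hgf⟩ := ih
    have hgx : g x₀ ≠ 0 := by
      intro h
      apply hx₀
      rw [hgf, h, mul_zero]
    obtain ⟨n, hn⟩ := ENat.ne_top_iff_exists.1 (analyticOrderAt_ne_top_of_entire hg hgx a)
    obtain ⟨g', hg', hga, hgg'⟩ := exists_pow_mul a n hg hn.symm
    refine ⟨Function.update k a n, g', hg', ?_, ?_⟩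
    · intro z hz
      rcases Finset.mem_insert.1 hz with rfl | hz
      · exact hga
      · intro h
        apply hgT z hz
        rw [hgg', h, mul_zero]
    · intro s
      rw [Finset.prod_insert ha, hgf, hgg']
      have : ∏ z ∈ T, (s - z) ^ (Function.update k a n z) = ∏ z ∈ T, (s - z) ^ k z := by
        refine Finset.prod_congr rfl fun z hz => ?_
        rw [Function.update_of_ne]
        rintro rfl
        exact ha hz
      rw [this]
      simp
      ring

theorem finite_zeros {f : ℂ → ℂ} (hf : Differentiable ℂ f) {x₀ : ℂ} (hx₀ : f x₀ ≠ 0)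
    {K : Set ℂ} (hK : IsCompact K) : {z ∈ K | f z = 0}.Finite := by
  have han : AnalyticOnNhd ℂ f univ := fun x _ => hf.analyticAt x
  by_contra hinf
  obtain ⟨z, hz, hacc⟩ := Set.Infinite.exists_accPt_of_subset_isCompact hinf hK (sep_subset _ _)
  have hfr : ∃ᶠ w in 𝓝[≠] z, f w = 0 := by
    rw [accPt_iff_frequently_nhdsNE] at hacc
    exact hacc.mono fun w hw => hw.2
  exact hx₀ (han.eqOn_zero_of_preconnected_of_frequently_eq_zero isPreconnected_univ
    (mem_univ z) hfr (mem_univ x₀))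

/-- A continuous function without zeros on the closed right half-plane has a continuous logarithm
there. -/
theorem exists_log_halfplane {g : ℂ → ℂ} (hg : Continuous g) (h0 : ∀ s : ℂ, 0 ≤ s.re → g s ≠ 0) :
    ∃ L : ℂ → ℂ, Continuous L ∧ ∀ s : ℂ, 0 ≤ s.re → Complex.exp (L s) = g s := by
  -- Precomposing with a retraction `r` of the plane onto the half-plane gives a zero-free function
  -- on the simply connected space `ℂ`.
  let r : ℂ → ℂ := fun s => ((max s.re 0 : ℝ) : ℂ) + (s.im : ℂ) * I
  have hr : Continuous r := by fun_prop
  have hrre : ∀ s, 0 ≤ (r s).re := fun s => by simp [r]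
  have hrid : ∀ s : ℂ, 0 ≤ s.re → r s = s := by
    intro s hs
    simp only [r, max_eq_left hs]
    exact Complex.re_add_im s
  obtain ⟨L, hL, hLe⟩ := Complex.exists_continuousOn_eqOn_exp_comp (X := ℂ) (U := univ)
    (g := g ∘ r) (by
      have : ContractibleSpace (univ : Set ℂ) := convex_univ.contractibleSpace univ_nonempty
      exact (inferInstance : SimplyConnectedSpace (univ : Set ℂ))) isOpen_univ
    (hg.comp hr).continuousOn (by
      rintro ⟨s, -, hs⟩
      exact h0 _ (hrre s) hs)
  refine ⟨L, continuousOn_univ.1 hL, fun s hs => ?_⟩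
  have := hLe (mem_univ s)
  simp only [Function.comp_apply, hrid s hs] at this
  exact this

/-! ### Winding along the imaginary axis -/

/-- For `s = -R exp(-iεπ/2)` with `ε ∈ [-1, 1]` and `‖z‖ < R`, the principal logarithm of
`z - s = (-s)(1 - z / s)` splits as a sum of principal logarithms. It is used at the two endpoints
`s = iR` (`ε = 1`) and `s = -iR` (`ε = -1`) of the imaginary segment. -/
theorem log_sub_eq {z s : ℂ} {R ε : ℝ} (hR : 0 < R) (hz : ‖z‖ < R) (hε : |ε| ≤ 1)
    (hs : s = R * Complex.exp (-(ε * (π / 2) : ℝ) * I) * (-1)) :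
    Complex.log (z - s) = Real.log R + (-(ε * (π / 2) : ℝ) * I) + Complex.log (1 - z / s) := by
  have hRC : (R : ℂ) ≠ 0 := by exact_mod_cast hR.ne'
  have hns : ‖s‖ = R := by
    rw [hs, norm_mul, norm_mul, ← Complex.ofReal_neg, Complex.norm_exp_ofReal_mul_I]
    simp [abs_of_pos hR]
  have hs0 : s ≠ 0 := by
    rw [← norm_pos_iff, hns]; exact hR
  have h1 : ‖-(z / s)‖ < 1 := by
    rw [norm_neg, norm_div, hns, div_lt_one hR]; exact hz
  have harg := Complex.arg_one_add_mem_Ioo h1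
  rw [← sub_eq_add_neg] at harg
  have hne : 1 - z / s ≠ 0 := by
    intro h
    rw [sub_eq_zero] at h
    rw [norm_neg, ← h] at h1
    simp at h1
  have hsexp : -s = Complex.exp (Real.log R + (-(ε * (π / 2) : ℝ) * I)) := by
    rw [Complex.exp_add, hs, ← Complex.ofReal_exp, Real.exp_log hR]; ring
  have hpi := Real.pi_pos
  have hb := abs_le.1 hε
  have e1 : -(π / 2) ≤ -(ε * (π / 2)) := by nlinarith
  have e2 : -(ε * (π / 2)) ≤ π / 2 := by nlinarith
  have him : ((Real.log R : ℂ) + (-(ε * (π / 2) : ℝ) * I)).im = -(ε * (π / 2)) := by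
    simp
  have hlog : Complex.log (-s) = Real.log R + (-(ε * (π / 2) : ℝ) * I) := by
    rw [hsexp, Complex.log_exp]
    · rw [him]; linarith
    · rw [him]; linarith
  have hargs : Complex.arg (-s) = -(ε * (π / 2)) := by
    rw [← Complex.log_im, hlog, him]
  have hfac : z - s = (-s) * (1 - z / s) := by field_simp; ring
  rw [hfac, Complex.log_mul (neg_ne_zero.2 hs0) hne, hlog]
  rw [hargs]
  constructor
  · linarith [harg.1]
  · linarith [harg.2]

/-- A form of the argument principle for the half disc of radius `R`. Suppose that the zeros of `f`
in the closed right half-plane form the set `T`, with multiplicities `k`, and that `Re f > 0` on the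
arc `‖s‖ = R`. The continuous logarithm of `ω ↦ f (iω)` normalized to be principal at `R` then
exceeds the principal one at `-R` by `2πi` times the number of zeros. -/
theorem exists_axis_log {f g : ℂ → ℂ} {T : Finset ℂ} {k : ℂ → ℕ} {R : ℝ} (hR : 0 < R)
    (hf : Continuous f) (hg : Continuous g)
    (hfac : ∀ s, f s = (∏ z ∈ T, (s - z) ^ k z) * g s)
    (hT : ∀ z ∈ T, 0 < z.re ∧ ‖z‖ < R) (hg0 : ∀ s : ℂ, 0 ≤ s.re → g s ≠ 0)
    (hpos : ∀ s : ℂ, 0 ≤ s.re → ‖s‖ = R → 0 < (f s).re) :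
    ∃ l : ℝ → ℂ, Continuous l ∧ (∀ ω : ℝ, Complex.exp (l ω) = f (I * ω)) ∧
      l R = Complex.log (f (I * R)) ∧
      l (-R) = Complex.log (f (I * (-R : ℝ))) + (∑ z ∈ T, k z : ℕ) * (2 * π * I) := by
  obtain ⟨L, hL, hLe⟩ := exists_log_halfplane hg hg0
  -- Along the arc `c`, both `log (f (c φ))` and `L (c φ) + ∑ k z * (log R + iφ + log (1 - z / c φ))`
  -- are continuous logarithms of `f (c φ)`; their difference `w` is therefore constant.
  let c : ℝ → ℂ := fun φ => R * Complex.exp (φ * I)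
  have hc : Continuous c := by fun_prop
  have hRC : (R : ℂ) ≠ 0 := by exact_mod_cast hR.ne'
  have hcn : ∀ φ, ‖c φ‖ = R := fun φ => by
    simp only [c, norm_mul, Complex.norm_exp_ofReal_mul_I]; simp [abs_of_pos hR]
  have hc0 : ∀ φ, c φ ≠ 0 := fun φ => by
    rw [← norm_pos_iff, hcn]; exact hR
  have hcre : ∀ φ ∈ Icc (-(π / 2)) (π / 2), 0 ≤ (c φ).re := by
    intro φ hφ
    have : (c φ).re = R * Real.cos φ := by
      simp only [c, Complex.re_ofReal_mul, Complex.exp_ofReal_mul_I_re]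
    rw [this]
    exact mul_nonneg hR.le (Real.cos_nonneg_of_mem_Icc hφ)
  have hslit : ∀ z ∈ T, ∀ φ, 0 < (1 - z / c φ).re := by
    intro z hz φ
    have h1 : ‖z / c φ‖ < 1 := by
      rw [norm_div, hcn, div_lt_one hR]; exact (hT z hz).2
    have := (Complex.re_le_norm (z / c φ)).trans_lt h1
    simp only [Complex.sub_re, Complex.one_re]
    linarith
  let w : ℝ → ℂ := fun φ => Complex.log (f (c φ)) - L (c φ)
    - ∑ z ∈ T, (k z : ℂ) * (Real.log R + φ * I + Complex.log (1 - z / c φ))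
  have hexpR : Complex.exp (Real.log R) = R := by
    rw [← Complex.ofReal_exp, Real.exp_log hR]
  have hw : ContinuousOn w (Icc (-(π / 2)) (π / 2)) := by
    refine ContinuousOn.sub (ContinuousOn.sub ?_ (by fun_prop)) ?_
    · refine ContinuousOn.clog (by fun_prop) fun φ hφ => ?_
      exact Or.inl (hpos _ (hcre φ hφ) (hcn φ))
    · refine continuousOn_finsetSum _ fun z hz => ?_
      refine ContinuousOn.mul (by fun_prop) (ContinuousOn.add (by fun_prop) ?_)
      refine ContinuousOn.clog ?_ fun φ _ => Or.inl (hslit z hz φ)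
      exact continuousOn_const.sub (continuousOn_const.div hc.continuousOn fun φ _ => hc0 φ)
  have hw1 : ∀ φ ∈ Icc (-(π / 2)) (π / 2), Complex.exp (w φ) = 1 := by
    intro φ hφ
    have hfne : f (c φ) ≠ 0 := by
      intro h
      have := hpos _ (hcre φ hφ) (hcn φ)
      rw [h] at this
      simp at this
    have hsum : Complex.exp (∑ z ∈ T, (k z : ℂ) * (Real.log R + φ * I + Complex.log (1 - z / c φ)))
        = ∏ z ∈ T, (c φ - z) ^ k z := by
      rw [Complex.exp_sum]
      refine Finset.prod_congr rfl fun z hz => ?_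
      rw [Complex.exp_nat_mul, Complex.exp_add, Complex.exp_add, hexpR, Complex.exp_log]
      · congr 1
        have h0 := hc0 φ
        change c φ * (1 - z / c φ) = _
        field_simp
      · intro h
        have := hslit z hz φ
        rw [h] at this
        simp at this
    simp only [w]
    rw [Complex.exp_sub, Complex.exp_sub, Complex.exp_log hfne, hLe _ (hcre φ hφ), hsum,
      div_div, mul_comm (g _), ← hfac, div_self hfne]
  have hpi := Real.pi_pos
  have harc := eq_of_exp_eq_one isPreconnected_Icc hw hw1
    (left_mem_Icc.2 (by linarith)) (right_mem_Icc.2 (by linarith))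
  have hcp : c (π / 2) = I * R := by
    simp only [c]
    push_cast
    rw [Complex.exp_pi_div_two_mul_I]; ring
  have hcm : c (-(π / 2)) = I * (-R : ℝ) := by
    simp only [c]
    push_cast
    rw [neg_mul, Complex.exp_neg, Complex.exp_pi_div_two_mul_I, Complex.inv_I]; ring
  simp only [w, hcp, hcm] at harc
  -- On the imaginary axis `s - z = -(z - s)` with `Re (z - s) > 0`, so `log (z - s) + πi` is a
  -- continuous logarithm of `s - z`.
  have hzre : ∀ z ∈ T, ∀ ω : ℝ, 0 < (z - I * ω).re := by
    intro z hz ω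
    simpa using (hT z hz).1
  let l₀ : ℝ → ℂ := fun ω => L (I * ω)
    + ∑ z ∈ T, (k z : ℂ) * (Complex.log (z - I * ω) + π * I)
  have hl₀ : Continuous l₀ := by
    refine Continuous.add (by fun_prop) ?_
    refine continuous_finsetSum _ fun z hz => ?_
    refine Continuous.mul (by fun_prop) (Continuous.add ?_ (by fun_prop))
    exact Continuous.clog (by fun_prop) fun ω => Or.inl (hzre z hz ω)
  have hl₀e : ∀ ω : ℝ, Complex.exp (l₀ ω) = f (I * ω) := by
    intro ω
    simp only [l₀]
    rw [Complex.exp_add, hLe _ (by simp), hfac, mul_comm, Complex.exp_sum]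
    congr 1
    refine Finset.prod_congr rfl fun z hz => ?_
    rw [Complex.exp_nat_mul, Complex.exp_add, Complex.exp_pi_mul_I, Complex.exp_log]
    · congr 1; ring
    · intro h
      have := hzre z hz ω
      rw [h] at this
      simp at this
  have hfR : f (I * R) ≠ 0 := by
    rw [← hl₀e]; exact Complex.exp_ne_zero _
  have hdiff : l₀ (-R) - l₀ R = L (I * (-R : ℝ)) - L (I * R)
      + ∑ z ∈ T, (k z : ℂ) * (π * I + Complex.log (1 - z / (I * (-R : ℝ)))
        - Complex.log (1 - z / (I * R))) := by
    simp only [l₀]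
    rw [add_sub_add_comm, ← Finset.sum_sub_distrib]
    congr 1
    refine Finset.sum_congr rfl fun z hz => ?_
    have e1 := log_sub_eq (z := z) (s := I * R) (ε := 1) hR (hT z hz).2 (by simp) (by
      push_cast
      rw [one_mul, neg_mul, Complex.exp_neg, Complex.exp_pi_div_two_mul_I, Complex.inv_I]; ring)
    have e2 := log_sub_eq (z := z) (s := I * (-R : ℝ)) (ε := -1) hR (hT z hz).2 (by simp) (by
      push_cast
      rw [show (-(-1 * ((π : ℂ) / 2)) * I) = π / 2 * I by ring, Complex.exp_pi_div_two_mul_I]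
      ring)
    rw [e1, e2]
    push_cast
    ring
  refine ⟨fun ω => l₀ ω - l₀ R + Complex.log (f (I * R)), by fun_prop, fun ω => ?_, by simp, ?_⟩
  · rw [Complex.exp_add, Complex.exp_sub, Complex.exp_log hfR, hl₀e, hl₀e]
    field_simp
  · simp only [hdiff]
    have hs : ∑ z ∈ T, (k z : ℂ) * (Real.log R + ((π / 2 : ℝ) : ℂ) * I + Complex.log (1 - z / (I * R)))
        - ∑ z ∈ T, (k z : ℂ) * (Real.log R + ((-(π / 2) : ℝ) : ℂ) * I
          + Complex.log (1 - z / (I * (-R : ℝ))))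
        + ∑ z ∈ T, (k z : ℂ) * (π * I + Complex.log (1 - z / (I * (-R : ℝ)))
        - Complex.log (1 - z / (I * R))) = (∑ z ∈ T, k z : ℕ) * (2 * π * I) := by
      rw [← Finset.sum_sub_distrib, ← Finset.sum_add_distrib]
      push_cast
      rw [Finset.sum_mul]
      refine Finset.sum_congr rfl fun z _ => ?_
      ring
    rw [← hs]
    linear_combination -harc

/-! ### Counting crossings of the imaginary line -/

/-- `zeroOrder` agrees with the analytic order, hence gives the exponent in the local factorization
of an analytic function. -/
theorem zeroOrder_factor {M : ℝ → ℝ} {x : ℝ} (hM : AnalyticAt ℝ M x)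
    (htop : analyticOrderAt M x ≠ ⊤) :
    ∃ h : ℝ → ℝ, ContinuousAt h x ∧ h x ≠ 0 ∧
      ∀ᶠ y in 𝓝 x, M y = (y - x) ^ zeroOrder M x * h y := by
  obtain ⟨n, hn⟩ := ENat.ne_top_iff_exists.1 htop
  have hz : zeroOrder M x = n := by
    have h1 := (natCast_le_analyticOrderAt_iff_iteratedDeriv_eq_zero (n := n) hM).1 hn.le
    have h2 : iteratedDeriv n M x ≠ 0 := by
      intro h0
      have := (natCast_le_analyticOrderAt_iff_iteratedDeriv_eq_zero (n := n + 1) hM).2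
        (fun i hi => by
          rcases Nat.lt_succ_iff_lt_or_eq.1 hi with hi | rfl
          · exact h1 i hi
          · exact h0)
      rw [← hn] at this
      have : n + 1 ≤ n := by exact_mod_cast this
      omega
    refine le_antisymm (Nat.sInf_le h2) (le_csInf ⟨n, h2⟩ fun k hk => ?_)
    by_contra hlt
    exact hk (h1 k (not_le.1 hlt))
  obtain ⟨h, hh, hh0, hev⟩ := hM.analyticOrderAt_eq_natCast.1 hn.symm
  refine ⟨h, hh.continuousAt, hh0, ?_⟩
  rw [hz]
  simpa using hev

/-- If near every point of `[a, b]` the property `P` holds throughout a punctured neighbourhood or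
fails throughout one, then it propagates from `b` to all of `[a, b]`, since both sets of points are
open. -/
theorem punctured_connected {P : ℝ → Prop} {a b : ℝ} (hab : a ≤ b)
    (h : ∀ x ∈ Icc a b, (∀ᶠ y in 𝓝[≠] x, P y) ∨ (∀ᶠ y in 𝓝[≠] x, ¬ P y))
    (hb : ∀ᶠ y in 𝓝[≠] b, P y) : ∀ x ∈ Icc a b, ∀ᶠ y in 𝓝[≠] x, P y := by
  have hopen : ∀ Q : ℝ → Prop, IsOpen {x | ∀ᶠ y in 𝓝[≠] x, Q y} := by
    intro Q
    rw [isOpen_iff_mem_nhds]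
    intro x hx
    have hx' := eventually_eventually_nhdsWithin.2 hx
    have h1 : ∀ᶠ y in 𝓝[≠] x, ∀ᶠ z in 𝓝[≠] y, Q z := by
      filter_upwards [hx', self_mem_nhdsWithin] with y hy hyx
      rw [nhdsWithin_eq_nhds.2 (isOpen_compl_singleton.mem_nhds hyx)] at hy
      exact hy.filter_mono nhdsWithin_le_nhds
    rw [eventually_nhdsWithin_iff] at h1
    filter_upwards [h1] with y hy
    by_cases hyx : y = x
    · rw [hyx]; exact hx
    · exact hy hyx
  by_contra hcon
  push Not at hcon
  obtain ⟨x, hx, hxP⟩ := hcon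
  have hxn : ∀ᶠ y in 𝓝[≠] x, ¬ P y := (h x hx).resolve_left (by simpa using hxP)
  obtain ⟨z, -, hz1, hz2⟩ := isPreconnected_Icc (a := a) (b := b) _ _ (hopen P)
    (hopen fun y => ¬ P y) (fun x hx => h x hx) ⟨b, right_mem_Icc.2 hab, hb⟩ ⟨x, hx, hxn⟩
  rw [Set.mem_ofPred_eq] at hz1 hz2
  obtain ⟨y, hy1, hy2⟩ := (hz1.and hz2).exists
  exact hy2 hy1

/-- For an initial segment `p` of `Fin m` the alternating sum of signs depends only on the parity of
its length. -/
theorem alternating_sum_lower (m : ℕ) (p : Fin m → Prop) [DecidablePred p]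
    (hp : ∀ i j, i ≤ j → p j → p i) :
    ∑ j : Fin m, (if p j then (-1 : ℝ) ^ (j : ℕ) else 0)
      = (1 - (-1) ^ (Finset.univ.filter p).card) / 2 := by
  induction m with
  | zero => simp
  | succ m ih =>
    by_cases h0 : p 0
    · have := ih (fun j => p j.succ) (fun i j hij => hp _ _ (Fin.succ_le_succ_iff.2 hij))
      rw [Fin.sum_univ_succ, Fin.card_filter_univ_succ]
      simp only [h0, if_true, Fin.val_zero, pow_zero, Fin.val_succ]
      have e : ∑ i : Fin m, (if p i.succ then (-1 : ℝ) ^ ((i : ℕ) + 1) else 0)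
          = - ∑ i : Fin m, (if p i.succ then (-1 : ℝ) ^ (i : ℕ) else 0) := by
        rw [← Finset.sum_neg_distrib]
        refine Finset.sum_congr rfl fun i _ => ?_
        split_ifs <;> simp [pow_succ]
      rw [e, this, pow_succ]
      ring
    · have hn : ∀ j, ¬ p j := fun j hj => h0 (hp 0 j (Fin.zero_le j) hj)
      simp [hn]

/-- Let `θ` be a continuous argument of the curve `ω ↦ M ω + i S ω`, lying in `(-π/2, π/2)` at `R` and
equal to `πn` at `0`. Then `n` is the alternating sum of the signs of `S` over the positive zeros of
`M`. The argument can change its branch only at the zeros of `M`, and the direction of the crossing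
is determined by the sign of `S` and by the sign of `M` on either side. -/
theorem crossing_count {M S θ : ℝ → ℝ} (hθ : Continuous θ)
    (hpolar : ∀ ω, ∃ a : ℝ, 0 < a ∧ M ω = a * Real.cos (θ ω) ∧ S ω = a * Real.sin (θ ω))
    (hMan : ∀ x, AnalyticAt ℝ M x) {R : ℝ} (hR : 0 < R) (hMR : ∀ ω, R ≤ ω → 0 < M ω)
    (hθR : |θ R| < π / 2) (n : ℕ) (hθ0 : θ 0 = π * n)
    (m : ℕ) (ρ : Fin m → ℝ) (hρdec : Antitone ρ) (hρzero : ∀ j : Fin m, 0 < ρ j ∧ M (ρ j) = 0)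
    (hρmult : ∀ r : ℝ, 0 < r → M r = 0 →
      ({j : Fin m | ρ j = r} : Set (Fin m)).ncard = zeroOrder M r) :
    ∑ j : Fin m, (-1 : ℝ) ^ (j : ℕ) * Real.sign (S (ρ j)) = n := by
  classical
  have hpi := Real.pi_pos
  -- `e ω` is the parity of the number of zeros to the right of `ω`, and `G ω` is the part of the
  -- alternating sum coming from these zeros.
  set e : ℝ → ℝ := fun ω => (-1) ^ (Finset.univ.filter fun j => ω < ρ j).card with he
  set G : ℝ → ℝ := fun ω => ∑ j, if ω < ρ j then (-1 : ℝ) ^ (j : ℕ) * Real.sign (S (ρ j)) else 0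
    with hG
  have hMc : Continuous M := continuous_iff_continuousAt.2 fun x => (hMan x).continuousAt
  have hM0 : M 0 ≠ 0 := by
    obtain ⟨a, ha, h1, -⟩ := hpolar 0
    rw [h1, hθ0, mul_comm π]
    rw [Real.cos_nat_mul_pi]
    exact mul_ne_zero ha.ne' (pow_ne_zero _ (by norm_num))
  have hee : ∀ ω, e ω = 1 ∨ e ω = -1 := fun ω => neg_one_pow_eq_or ℝ _
  have hGint : ∀ ω, ∃ z : ℤ, G ω = z := by
    intro ω
    have : ∀ j : Fin m, ∃ z : ℤ,
        (if ω < ρ j then (-1 : ℝ) ^ (j : ℕ) * Real.sign (S (ρ j)) else 0) = z := by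
      intro j
      split_ifs
      · rcases Real.sign_apply_eq (S (ρ j)) with h | h | h <;> rw [h]
        · exact ⟨(-1) ^ (j : ℕ) * (-1), by push_cast; ring⟩
        · exact ⟨0, by simp⟩
        · exact ⟨(-1) ^ (j : ℕ), by push_cast; ring⟩
      · exact ⟨0, by simp⟩
    choose z hz using this
    exact ⟨∑ j, z j, by simp only [hG]; push_cast; exact Finset.sum_congr rfl fun j _ => hz j⟩
  have hTe : ∀ ω, ∑ j : Fin m, (if ω < ρ j then (-1 : ℝ) ^ (j : ℕ) else 0) = (1 - e ω) / 2 :=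
    fun ω => alternating_sum_lower m (fun j => ω < ρ j)
      fun i j hij hj => hj.trans_le (hρdec hij)
  -- near `x`, only the zeros equal to `x` change side
  have hside : ∀ x, ∀ᶠ y in 𝓝 x, ∀ j, ρ j ≠ x → (y < ρ j ↔ x < ρ j) := by
    intro x
    rw [eventually_all]
    intro j
    by_cases hj : ρ j = x
    · exact Eventually.of_forall fun y h => absurd hj h
    rcases lt_or_gt_of_ne hj with h | h
    · filter_upwards [lt_mem_nhds h] with y hy _
      exact ⟨fun h' => absurd h' (not_lt.2 hy.le), fun h' => absurd h' (not_lt.2 h.le)⟩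
    · filter_upwards [gt_mem_nhds h] with y hy _
      exact ⟨fun _ => h, fun _ => hy⟩
  -- `G` jumps at `x` in step with `e`: all zeros equal to `x` carry the same sign `sign (S x)`.
  have hGE : ∀ x, ∀ᶠ y in 𝓝 x, G y + Real.sign (S x) * e y / 2
      = G x + Real.sign (S x) * e x / 2 := by
    intro x
    filter_upwards [hside x] with y hy
    have key : G y - Real.sign (S x) * ((1 - e y) / 2)
        = G x - Real.sign (S x) * ((1 - e x) / 2) := by
      rw [← hTe, ← hTe]
      simp only [hG]
      rw [Finset.mul_sum, Finset.mul_sum, ← Finset.sum_sub_distrib, ← Finset.sum_sub_distrib]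
      refine Finset.sum_congr rfl fun j _ => ?_
      by_cases hj : ρ j = x
      · rw [hj]; split_ifs <;> ring
      · simp only [hy j hj]
    linarith
  -- `e` changes sign across `x` exactly when the multiplicity of `x` is odd.
  have hcard : ∀ x, ∀ᶠ y in 𝓝 x, y ≠ x → e y * (y - x) ^ (Finset.univ.filter fun j => ρ j = x).card
      = e x * |y - x| ^ (Finset.univ.filter fun j => ρ j = x).card := by
    intro x
    filter_upwards [hside x] with y hy hyx
    rcases lt_or_gt_of_ne hyx with hlt | hgt
    · have hc : (Finset.univ.filter fun j => y < ρ j).card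
          = (Finset.univ.filter fun j => x < ρ j).card
            + (Finset.univ.filter fun j => ρ j = x).card := by
        rw [← Finset.card_union_of_disjoint]
        · congr 1
          ext j
          simp only [Finset.mem_filter, Finset.mem_univ, true_and, Finset.mem_union]
          by_cases hj : ρ j = x
          · simp [hj, hlt]
          · simp [hj, hy j hj]
        · rw [Finset.disjoint_filter]
          intro j _ h1 h2
          exact absurd h2 h1.ne'
      simp only [he, hc]
      rw [abs_of_neg (by linarith), pow_add, mul_assoc, ← mul_pow]
      ring_nf
    · have hc : (Finset.univ.filter fun j => y < ρ j)
          = (Finset.univ.filter fun j => x < ρ j) := by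
        ext j
        simp only [Finset.mem_filter, Finset.mem_univ, true_and]
        by_cases hj : ρ j = x
        · simp [hj, hgt.le]
        · exact hy j hj
      simp only [he, hc]
      rw [abs_of_pos (by linarith)]
  have htop : ∀ x, analyticOrderAt M x ≠ ⊤ := by
    intro x h
    rw [analyticOrderAt_eq_top] at h
    have han : AnalyticOnNhd ℝ M univ := fun x _ => hMan x
    have := han.eqOn_zero_of_preconnected_of_eventuallyEq_zero isPreconnected_univ
      (mem_univ x) h (mem_univ R)
    exact (hMR R le_rfl).ne' this
  have hfac : ∀ x, 0 ≤ x → ∃ h : ℝ → ℝ, ContinuousAt h x ∧ h x ≠ 0 ∧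
      ∀ᶠ y in 𝓝 x, M y = (y - x) ^ (Finset.univ.filter fun j => ρ j = x).card * h y := by
    intro x hx
    by_cases hMx : M x = 0
    · have hx0 : 0 < x := lt_of_le_of_ne hx (by rintro rfl; exact hM0 hMx)
      have := hρmult x hx0 hMx
      rw [Set.ncard_eq_toFinset_card'] at this
      have h2 : (Finset.univ.filter fun j => ρ j = x).card = zeroOrder M x := by
        rw [← this]; congr 1; ext j; simp
      rw [h2]
      exact zeroOrder_factor (hMan x) (htop x)
    · refine ⟨M, hMc.continuousAt, hMx, ?_⟩
      have : (Finset.univ.filter fun j => ρ j = x) = ∅ := by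
        rw [Finset.filter_eq_empty_iff]
        rintro j - rfl
        exact hMx (hρzero j).2
      rw [this]
      simp
  have hρR : ∀ j, ρ j < R := by
    intro j
    by_contra h
    exact (hMR _ (not_lt.1 h)).ne' (hρzero j).2
  have hRev : ∀ᶠ y in 𝓝 R, ∀ j, ¬ y < ρ j := by
    rw [eventually_all]
    intro j
    filter_upwards [lt_mem_nhds (hρR j)] with y hy
    exact not_lt.2 hy.le
  -- the sign of `M` is the parity of the number of zeros to the right
  have hP1 : ∀ x ∈ Icc 0 R, ∀ᶠ y in 𝓝[≠] x, 0 < e y * M y := by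
    refine punctured_connected hR.le (fun x hx => ?_) ?_
    · obtain ⟨h, hc, hx0, hev⟩ := hfac x hx.1
      have hform : ∀ᶠ y in 𝓝[≠] x, e y * M y
          = |y - x| ^ (Finset.univ.filter fun j => ρ j = x).card * (e x * h y) := by
        filter_upwards [(hcard x).filter_mono nhdsWithin_le_nhds,
          hev.filter_mono nhdsWithin_le_nhds, self_mem_nhdsWithin] with y h1 h2 h3
        rw [h2, ← mul_assoc, h1 h3]; ring
      have hcont : ContinuousAt (fun y => e x * h y) x := by fun_prop
      have hexne : e x * h x ≠ 0 := mul_ne_zero (by rcases hee x with h | h <;> rw [h] <;> norm_num) hx0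
      rcases lt_or_gt_of_ne hexne with hneg | hpos
      · right
        filter_upwards [hform, (hcont.eventually_lt_const hneg).filter_mono nhdsWithin_le_nhds]
          with y h1 h2
        rw [h1, not_lt]
        exact mul_nonpos_of_nonneg_of_nonpos (by positivity) h2.le
      · left
        filter_upwards [hform, (hcont.eventually_const_lt hpos).filter_mono nhdsWithin_le_nhds,
          self_mem_nhdsWithin] with y h1 h2 h3
        rw [h1]
        have : 0 < |y - x| := abs_pos.2 (sub_ne_zero.2 h3)
        positivity
    · filter_upwards [hRev.filter_mono nhdsWithin_le_nhds,
        (hMc.continuousAt.eventually_const_lt (hMR R le_rfl)).filter_mono nhdsWithin_le_nhds]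
        with y h1 h2
      simp only [he, h1]
      simpa using h2
  have hcosne : ∀ x, M x ≠ 0 → Real.cos (θ x) ≠ 0 := by
    intro x hx h
    obtain ⟨a, ha, h1, -⟩ := hpolar x
    rw [h1, h, mul_zero] at hx
    exact hx rfl
  -- the angle stays within `π / 2` of `π G`
  have hP2 : ∀ x ∈ Icc 0 R, ∀ᶠ y in 𝓝[≠] x, |θ y - π * G y| < π / 2 := by
    refine punctured_connected hR.le (fun x hx => ?_) ?_
    · by_cases hMx : M x = 0
      · obtain ⟨a, ha, h1, h2⟩ := hpolar x
        have hcos : Real.cos (θ x) = 0 := by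
          rw [h1] at hMx
          exact (mul_eq_zero.1 hMx).resolve_left ha.ne'
        have hsin : Real.sin (θ x) = 1 ∨ Real.sin (θ x) = -1 := by
          have := Real.sin_sq_add_cos_sq (θ x)
          rw [hcos] at this
          exact or_iff_not_imp_left.2 fun h => by
            have h' : (Real.sin (θ x) - 1) * (Real.sin (θ x) + 1) = 0 := by linarith [this, sq (Real.sin (θ x))]
            linarith [(mul_eq_zero.1 h').resolve_left (sub_ne_zero.2 h)]
        have hσ : Real.sign (S x) = Real.sin (θ x) := by
          rw [h2]
          rcases hsin with h | h <;> rw [h]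
          · rw [mul_one, Real.sign_of_pos ha]
          · rw [Real.sign_of_neg (by linarith)]
        obtain ⟨q, hq⟩ := Real.cos_eq_zero_iff.1 hcos
        -- Here `θ x ≡ ± π / 2` mod `2π`, and the known sign of `M y` tells on which side of `θ x` the angle
        -- `θ y` lies.
        have hloc : ∀ᶠ y in 𝓝[≠] x, |θ y - (θ x - π * (Real.sign (S x) * e y) / 2)| < π / 2 := by
          have hclose : ∀ᶠ y in 𝓝[≠] x, |θ y - θ x| < π / 2 :=
            Eventually.filter_mono nhdsWithin_le_nhds
              (Metric.continuousAt_iff'.1 hθ.continuousAt (π / 2) (by linarith))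
          filter_upwards [hP1 x hx, hclose] with y hy1 hy2
          obtain ⟨b, hb, hb1, -⟩ := hpolar y
          have hcy : Real.cos (θ y) = - Real.sin (θ x) * Real.sin (θ y - θ x) := by
            conv_lhs => rw [show θ y = θ x + (θ y - θ x) by ring]
            rw [Real.cos_add, hcos]; ring
          rw [hb1, hcy] at hy1
          obtain ⟨l1, l2⟩ := abs_lt.1 hy2
          set d := θ y - θ x with hd
          have hmul : 0 < b * (- (Real.sin (θ x) * e y) * Real.sin d) := by
            have : b * (- (Real.sin (θ x) * e y) * Real.sin d)
              = e y * (b * (-Real.sin (θ x) * Real.sin d)) := by ring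
            rw [this]; exact hy1
          have hpos := (mul_pos_iff_of_pos_left hb).1 hmul
          have hu : Real.sin (θ x) * e y = 1 ∨ Real.sin (θ x) * e y = -1 := by
            rcases hsin with h | h <;> rcases hee y with h' | h' <;> rw [h, h'] <;> norm_num
          rw [hσ, abs_lt]
          rcases hu with h | h <;> rw [h] at hpos ⊢
          · have : d < 0 := by
              by_contra hcon
              have := Real.sin_nonneg_of_nonneg_of_le_pi (not_lt.1 hcon) (by linarith)
              linarith
            constructor <;> linarith
          · have : 0 < d := by
              by_contra hcon
              have := Real.sin_nonpos_of_nonpos_of_neg_pi_le (not_lt.1 hcon) (by linarith)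
              linarith
            constructor <;> linarith
        by_cases hE : θ x = π * (G x + Real.sign (S x) * e x / 2)
        · left
          filter_upwards [hloc, (hGE x).filter_mono nhdsWithin_le_nhds] with y h3 h4
          have : π * G y = θ x - π * (Real.sign (S x) * e y) / 2 := by
            rw [hE, ← h4]; ring
          rw [this]; exact h3
        · right
          filter_upwards [hloc, (hGE x).filter_mono nhdsWithin_le_nhds] with y h3 h4 h5
          apply hE
          rw [← h4]
          obtain ⟨z, hz⟩ := hGint y
          rw [hz] at h5 ⊢
          have hu : Real.sign (S x) * e y = 1 ∨ Real.sign (S x) * e y = -1 := by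
            rw [hσ]
            rcases hsin with h | h <;> rcases hee y with h' | h' <;> rw [h, h'] <;> norm_num
          rw [abs_lt] at h3 h5
          rw [hq] at h3 ⊢
          rcases hu with h | h <;> rw [h] at h3 ⊢
          · have hlt1 : ((z : ℝ)) < q + 1 := by
              by_contra hcon
              nlinarith
            have hlt2 : (q : ℝ) < z + 1 := by
              by_contra hcon
              nlinarith
            have e1 : z < q + 1 := by exact_mod_cast hlt1
            have e2 : q < z + 1 := by exact_mod_cast hlt2
            have : z = q := by omega
            rw [this]; ring
          · have hlt1 : ((z : ℝ)) < q + 2 := by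
              by_contra hcon
              nlinarith
            have hlt2 : (q : ℝ) < z := by
              by_contra hcon
              nlinarith
            have e1 : z < q + 2 := by exact_mod_cast hlt1
            have e2 : q < z := by exact_mod_cast hlt2
            have : z = q + 1 := by omega
            rw [this]; push_cast; ring
      · have hGx : ∀ᶠ y in 𝓝 x, G y = G x := by
          filter_upwards [hside x] with y hy
          simp only [hG]
          refine Finset.sum_congr rfl fun j _ => ?_
          have : ρ j ≠ x := by
            rintro rfl
            exact hMx (hρzero j).2
          simp only [hy j this]
        have hne : |θ x - π * G x| ≠ π / 2 := by
          intro h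
          apply hcosne x hMx
          obtain ⟨z, hz⟩ := hGint x
          rw [hz] at h
          rw [Real.cos_eq_zero_iff]
          rcases (abs_eq (by linarith)).1 h with h | h
          · exact ⟨z, by linarith⟩
          · exact ⟨z - 1, by push_cast; linarith⟩
        have hcont : ContinuousAt (fun y => |θ y - π * G x|) x := by fun_prop
        rcases lt_or_gt_of_ne hne with hlt | hgt
        · left
          refine Eventually.filter_mono nhdsWithin_le_nhds ?_
          filter_upwards [hGx, hcont.eventually_lt_const hlt] with y h1 h2
          rw [h1]; exact h2
        · right
          refine Eventually.filter_mono nhdsWithin_le_nhds ?_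
          filter_upwards [hGx, hcont.eventually_const_lt hgt] with y h1 h2
          rw [h1]; exact not_lt.2 h2.le
    · refine Eventually.filter_mono nhdsWithin_le_nhds ?_
      have hcont : ContinuousAt (fun y => |θ y|) R := by fun_prop
      filter_upwards [hRev, hcont.eventually_lt_const hθR] with y h1 h2
      simp only [hG, h1]
      simpa using h2
  -- Near `0` the function `G` is the full alternating sum, and `θ` is close to `πn`.
  have hclose : ∀ᶠ y in 𝓝[≠] (0 : ℝ), |θ y - θ 0| < π / 2 :=
    Eventually.filter_mono nhdsWithin_le_nhds
      (Metric.continuousAt_iff'.1 hθ.continuousAt (π / 2) (by linarith))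
  have hG0 : ∀ᶠ y in 𝓝[≠] (0 : ℝ), G y = ∑ j : Fin m, (-1 : ℝ) ^ (j : ℕ) * Real.sign (S (ρ j)) := by
    refine Eventually.filter_mono nhdsWithin_le_nhds ?_
    filter_upwards [hside 0] with y hy
    simp only [hG]
    refine Finset.sum_congr rfl fun j _ => ?_
    rw [if_pos ((hy j (hρzero j).1.ne').2 (hρzero j).1)]
  obtain ⟨y, ⟨h1, h2⟩, h3⟩ := ((hclose.and hG0).and (hP2 0 ⟨le_rfl, hR.le⟩)).exists
  rw [← h2]
  obtain ⟨z, hz⟩ := hGint y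
  rw [hz] at h3 ⊢
  rw [hθ0] at h1
  rw [abs_lt] at h1 h3
  have hlt1 : ((z : ℝ)) < n + 1 := by
    by_contra hcon
    nlinarith
  have hlt2 : (n : ℝ) < z + 1 := by
    by_contra hcon
    nlinarith
  have e1 : z < n + 1 := by exact_mod_cast hlt1
  have e2 : (n : ℤ) < z + 1 := by exact_mod_cast hlt2
  have : z = n := by omega
  rw [this]; simp

/-! ### The finite Laplace transform -/

theorem differentiable_laplace {τ : ℝ} (hτ : 0 < τ) {N : ℝ → ℝ} (hN : ContinuousOn N (Icc 0 τ)) :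
    Differentiable ℂ fun s : ℂ => ∫ ν in (0 : ℝ)..τ, (N ν : ℂ) * Complex.exp (-s * ν) := by
  intro s₀
  have hcont : ∀ h : ℝ → ℂ, Continuous h → ContinuousOn (fun ν => (N ν : ℂ) * h ν) (uIcc 0 τ) := by
    intro h hh
    rw [uIcc_of_le hτ.le]
    exact (Complex.continuous_ofReal.comp_continuousOn hN).mul hh.continuousOn
  have hmeas : ∀ h : ℝ → ℂ, Continuous h → AEStronglyMeasurable (fun ν => (N ν : ℂ) * h ν)
      (volume.restrict (uIoc 0 τ)) := fun h hh =>
    (intervalIntegrable_iff.1 (hcont h hh).intervalIntegrable).aestronglyMeasurable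
  have hNi : IntervalIntegrable (fun ν => |N ν|) volume 0 τ := by
    apply ContinuousOn.intervalIntegrable
    rw [uIcc_of_le hτ.le]
    exact hN.abs
  have := intervalIntegral.hasDerivAt_integral_of_dominated_loc_of_deriv_le
    (μ := volume) (a := 0) (b := τ) (x₀ := s₀) (s := Metric.ball s₀ 1)
    (F := fun s ν => (N ν : ℂ) * Complex.exp (-s * ν))
    (F' := fun s ν => (N ν : ℂ) * (Complex.exp (-s * ν) * (-ν)))
    (bound := fun ν => |N ν| * (Real.exp ((‖s₀‖ + 1) * τ) * τ))
    (Metric.ball_mem_nhds s₀ one_pos)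
    (Eventually.of_forall fun s => hmeas _ (by fun_prop))
    (hcont _ (by fun_prop)).intervalIntegrable
    (hmeas _ (by fun_prop))
    (by
      refine Eventually.of_forall fun ν hν s hs => ?_
      rw [uIoc_of_le hτ.le] at hν
      rw [norm_mul, norm_mul, Complex.norm_real, Real.norm_eq_abs, norm_neg, Complex.norm_real,
        Real.norm_eq_abs, Complex.norm_exp, abs_of_pos hν.1]
      have hsn : ‖s‖ ≤ ‖s₀‖ + 1 := by
        have h1 : ‖s - s₀‖ < 1 := by simpa [dist_eq_norm] using hs
        have h2 := norm_le_norm_add_norm_sub' s s₀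
        linarith
      have hre : (-s * (ν : ℂ)).re ≤ (‖s₀‖ + 1) * τ := by
        refine (Complex.re_le_norm _).trans ?_
        rw [norm_mul, norm_neg, Complex.norm_real, Real.norm_eq_abs, abs_of_pos hν.1]
        exact mul_le_mul hsn hν.2 hν.1.le (by positivity)
      gcongr
      · exact hν.1.le
      · exact hν.2)
    (hNi.mul_const _)
    (by
      refine Eventually.of_forall fun ν hν s hs => ?_
      have h1 : HasDerivAt (fun s : ℂ => -s * (ν : ℂ)) (-(ν : ℂ)) s := by
        simpa using (hasDerivAt_id s).neg.mul_const (ν : ℂ)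
      exact h1.cexp.const_mul _)
  exact this.2.differentiableAt

/-- Integration by parts gives decay of order `1 / ‖s‖` for a polynomial kernel. -/
theorem laplace_poly_bound {τ : ℝ} (hτ : 0 < τ) (p : Polynomial ℝ) :
    ∃ C : ℝ, ∀ s : ℂ, 0 ≤ s.re → s ≠ 0 →
      ‖∫ ν in (0 : ℝ)..τ, ((p.eval ν : ℝ) : ℂ) * Complex.exp (-s * ν)‖ ≤ C / ‖s‖ := by
  obtain ⟨B, hB⟩ := isCompact_Icc.exists_bound_of_continuousOn
    (s := Icc 0 τ) (f := fun x => p.derivative.eval x) p.derivative.continuous.continuousOn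
  refine ⟨|p.eval τ| + |p.eval 0| + B * τ, fun s hs hs0 => ?_⟩
  have hexp : ∀ ν : ℝ, 0 ≤ ν → ‖Complex.exp (-s * ν)‖ ≤ 1 := by
    intro ν hν
    rw [Complex.norm_exp, Real.exp_le_one_iff]
    simp
    positivity
  have hu : ∀ x ∈ uIcc 0 τ, HasDerivAt (fun x : ℝ => ((p.eval x : ℝ) : ℂ))
      ((p.derivative.eval x : ℝ) : ℂ) x := fun x _ => (p.hasDerivAt x).ofReal_comp
  have hv : ∀ x ∈ uIcc 0 τ, HasDerivAt (fun x : ℝ => Complex.exp (-s * x) / (-s))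
      (Complex.exp (-s * x)) x := by
    intro x _
    have h1 : HasDerivAt (fun x : ℝ => -s * (x : ℂ)) (-s) x := by
      simpa using (Complex.ofRealCLM.hasDerivAt (x := x)).const_mul (-s)
    have := (h1.cexp).div_const (-s)
    rwa [mul_div_assoc, div_self (neg_ne_zero.2 hs0), mul_one] at this
  rw [intervalIntegral.integral_mul_deriv_eq_deriv_mul hu hv
    ((Complex.continuous_ofReal.comp p.derivative.continuous).intervalIntegrable _ _)
    ((by fun_prop : Continuous fun x : ℝ => Complex.exp (-s * x)).intervalIntegrable _ _)]
  have hinteg : ‖∫ x in (0 : ℝ)..τ, ((p.derivative.eval x : ℝ) : ℂ) * (Complex.exp (-s * x) / (-s))‖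
      ≤ B / ‖s‖ * |τ - 0| := by
    apply intervalIntegral.norm_integral_le_of_norm_le_const
    intro x hx
    rw [uIoc_of_le hτ.le] at hx
    rw [norm_mul, norm_div, norm_neg, Complex.norm_real, ← mul_div_assoc]
    gcongr
    calc _ ≤ B * 1 := mul_le_mul (hB x ⟨hx.1.le, hx.2⟩) (hexp x hx.1.le) (norm_nonneg _)
            ((norm_nonneg _).trans (hB x ⟨hx.1.le, hx.2⟩))
      _ = B := mul_one B
  have hend : ∀ x : ℝ, 0 ≤ x → ‖((p.eval x : ℝ) : ℂ) * (Complex.exp (-s * x) / (-s))‖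
      ≤ |p.eval x| / ‖s‖ := by
    intro x hx
    rw [norm_mul, norm_div, norm_neg, Complex.norm_real, ← mul_div_assoc, Real.norm_eq_abs]
    gcongr
    exact mul_le_of_le_one_right (abs_nonneg _) (hexp x hx)
  rw [sub_zero, abs_of_pos hτ] at hinteg
  refine (norm_sub_le _ _).trans ((add_le_add ((norm_sub_le _ _).trans
    (add_le_add (hend τ hτ.le) (hend 0 le_rfl))) hinteg).trans (le_of_eq ?_))
  ring

/-- A Riemann–Lebesgue lemma, uniform in the closed right half-plane: the finite Laplace transform
of a continuous function tends to `0` as `‖s‖ → ∞`. It follows from the polynomial case by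
Weierstrass approximation. -/
theorem laplace_small {τ : ℝ} (hτ : 0 < τ) {N : ℝ → ℝ} (hN : ContinuousOn N (Icc 0 τ))
    {ε : ℝ} (hε : 0 < ε) : ∃ R : ℝ, 0 < R ∧ ∀ s : ℂ, 0 ≤ s.re → R ≤ ‖s‖ →
      ‖∫ ν in (0 : ℝ)..τ, (N ν : ℂ) * Complex.exp (-s * ν)‖ < ε := by
  obtain ⟨p, hp⟩ := exists_polynomial_near_of_continuousOn 0 τ N hN (ε / (2 * τ)) (by positivity)
  obtain ⟨C, hC⟩ := laplace_poly_bound hτ p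
  refine ⟨2 * |C| / ε + 1, by positivity, fun s hs hR => ?_⟩
  have hspos : 0 < ‖s‖ := lt_of_lt_of_le (by positivity) hR
  have hs0 : s ≠ 0 := norm_pos_iff.1 hspos
  have hNc : ContinuousOn (fun ν : ℝ => (N ν : ℂ) * Complex.exp (-s * ν)) (uIcc 0 τ) := by
    rw [uIcc_of_le hτ.le]
    exact (Complex.continuous_ofReal.comp_continuousOn hN).mul
      (by fun_prop : Continuous fun ν : ℝ => Complex.exp (-s * ν)).continuousOn
  have hpc : Continuous (fun ν : ℝ => ((p.eval ν : ℝ) : ℂ) * Complex.exp (-s * ν)) :=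
    (Complex.continuous_ofReal.comp p.continuous).mul (by fun_prop)
  have hsplit : ∫ ν in (0 : ℝ)..τ, (N ν : ℂ) * Complex.exp (-s * ν)
      = (∫ ν in (0 : ℝ)..τ, ((p.eval ν : ℝ) : ℂ) * Complex.exp (-s * ν))
        - ∫ ν in (0 : ℝ)..τ, (((p.eval ν - N ν : ℝ) : ℂ) * Complex.exp (-s * ν)) := by
    rw [← intervalIntegral.integral_sub (hpc.intervalIntegrable _ _)]
    · congr 1
      ext ν
      push_cast
      ring
    · apply ContinuousOn.intervalIntegrable
      refine (hpc.continuousOn.sub hNc).congr fun ν _ => ?_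
      simp only [Pi.sub_apply]
      push_cast
      ring
  have h2 : ‖∫ ν in (0 : ℝ)..τ, (((p.eval ν - N ν : ℝ) : ℂ) * Complex.exp (-s * ν))‖
      ≤ ε / (2 * τ) * |τ - 0| := by
    apply intervalIntegral.norm_integral_le_of_norm_le_const
    intro x hx
    rw [uIoc_of_le hτ.le] at hx
    rw [norm_mul, Complex.norm_real, Real.norm_eq_abs]
    have h1 : ‖Complex.exp (-s * x)‖ ≤ 1 := by
      rw [Complex.norm_exp, Real.exp_le_one_iff]
      have := hx.1.le
      simp
      positivity
    exact (mul_le_of_le_one_right (abs_nonneg _) h1).trans (hp x ⟨hx.1.le, hx.2⟩).le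
  have h3 : ε / (2 * τ) * |τ - 0| = ε / 2 := by
    rw [sub_zero, abs_of_pos hτ]; field_simp
  have h4 : C / ‖s‖ < ε / 2 := by
    rw [div_lt_iff₀ hspos]
    have h5 : 2 * |C| / ε < ‖s‖ := by linarith
    rw [div_lt_iff₀ hε] at h5
    linarith [le_abs_self C]
  rw [hsplit]
  refine (norm_sub_le _ _).trans_lt ?_
  linarith [hC s hs hs0]

/-! ### The stability criterion -/

theorem stmt_9 (τ ξ : ℝ) (hτ : 0 < τ) (hξ : |ξ| < 1) (N : ℝ → ℝ)
    (hN : ContinuousOn N (Set.Icc 0 τ))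
    (Δ : ℂ → ℂ)
    (hΔ : ∀ s : ℂ, Δ s = 1 - (ξ : ℂ) * Complex.exp (-s * τ)
      - ∫ ν in (0:ℝ)..τ, (N ν : ℂ) * Complex.exp (-s * ν))
    (M S : ℝ → ℝ)
    (hM : ∀ ω : ℝ, M ω = (Δ (Complex.I * ω)).re)
    (hS : ∀ ω : ℝ, S ω = (Δ (Complex.I * ω)).im)
    -- `Δ` has no roots on the imaginary axis
    (hnoim : ∀ ω : ℝ, Δ (Complex.I * ω) ≠ 0)
    -- `ρ₁ ≥ ρ₂ ≥ … ≥ ρ_m > 0` are the positive zeros of `M`, repeated according to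
    -- their multiplicities and ordered decreasingly
    (m : ℕ) (ρ : Fin m → ℝ)
    (hρdec : Antitone ρ)
    (hρzero : ∀ j : Fin m, 0 < ρ j ∧ M (ρ j) = 0)
    (hρmult : ∀ r : ℝ, 0 < r → M r = 0 →
      ({j : Fin m | ρ j = r} : Set (Fin m)).ncard = zeroOrder M r)
    (Γ : ℝ) (hΓ : Γ = ∑ j : Fin m, (-1 : ℝ) ^ (j : ℕ) * Real.sign (S (ρ j))) :
    (∀ s : ℂ, 0 ≤ s.re → Δ s ≠ 0) ↔ ((∫ ν in (0:ℝ)..τ, N ν) < 1 - ξ ∧ Γ = 0) := by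
  have hent : Differentiable ℂ Δ := by
    have : Δ = fun s => 1 - (ξ : ℂ) * Complex.exp (-s * τ)
      - ∫ ν in (0:ℝ)..τ, (N ν : ℂ) * Complex.exp (-s * ν) := funext hΔ
    rw [this]
    exact Differentiable.sub (by fun_prop) (differentiable_laplace hτ hN)
  have hconj : ∀ ω : ℝ, Δ (I * (-ω : ℝ)) = (starRingEnd ℂ) (Δ (I * ω)) := by
    intro ω
    have hinteg : (starRingEnd ℂ) (∫ ν in (0:ℝ)..τ, (N ν : ℂ) * Complex.exp (-(I * ω) * ν))
        = ∫ ν in (0:ℝ)..τ, (N ν : ℂ) * Complex.exp (-(I * (-ω : ℝ)) * ν) := by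
      rw [intervalIntegral.integral_of_le hτ.le, intervalIntegral.integral_of_le hτ.le,
        ← integral_conj]
      congr 1
      ext ν
      rw [map_mul, Complex.conj_ofReal, ← Complex.exp_conj]
      congr 2
      simp
    rw [hΔ, hΔ, map_sub, map_sub, hinteg, map_mul, map_one, Complex.conj_ofReal, ← Complex.exp_conj]
    congr 4
    simp
  obtain ⟨R, hR, hRsmall⟩ := laplace_small hτ hN (sub_pos.2 hξ)
  have hre : ∀ s : ℂ, 0 ≤ s.re → R ≤ ‖s‖ → 0 < (Δ s).re := by
    intro s hs hsR
    have h1 := hRsmall s hs hsR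
    have h2 : ‖(ξ : ℂ) * Complex.exp (-s * τ)‖ ≤ |ξ| := by
      rw [norm_mul, Complex.norm_real, Real.norm_eq_abs]
      refine mul_le_of_le_one_right (abs_nonneg _) ?_
      rw [Complex.norm_exp, Real.exp_le_one_iff]
      simp
      positivity
    rw [hΔ, Complex.sub_re, Complex.sub_re, Complex.one_re]
    have h3 := Complex.re_le_norm ((ξ : ℂ) * Complex.exp (-s * τ))
    have h4 := Complex.re_le_norm (∫ ν in (0:ℝ)..τ, (N ν : ℂ) * Complex.exp (-s * ν))
    linarith
  have hne : ∀ s : ℂ, 0 < (Δ s).re → Δ s ≠ 0 := by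
    intro s hs h
    rw [h] at hs
    simp at hs
  have hx₀ : Δ R ≠ 0 := hne _ (hre R (by simpa using hR.le) (by simp [abs_of_pos hR]))
  have hKc : IsCompact (Metric.closedBall (0 : ℂ) R ∩ {s : ℂ | 0 ≤ s.re}) :=
    (isCompact_closedBall 0 R).inter_right (isClosed_le continuous_const Complex.continuous_re)
  have hfin := finite_zeros hent hx₀ hKc
  set T := hfin.toFinset with hTdef
  have hmemT : ∀ s, s ∈ T ↔ 0 ≤ s.re ∧ Δ s = 0 := by
    intro s
    rw [hTdef, Set.Finite.mem_toFinset]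
    constructor
    · rintro ⟨⟨-, h⟩, h'⟩
      exact ⟨h, h'⟩
    · rintro ⟨h, h'⟩
      refine ⟨⟨?_, h⟩, h'⟩
      rw [mem_closedBall_zero_iff]
      by_contra hcon
      exact hne s (hre s h (not_le.1 hcon).le) h'
  have hTprop : ∀ z ∈ T, 0 < z.re ∧ ‖z‖ < R := by
    intro z hz
    obtain ⟨h, h'⟩ := (hmemT z).1 hz
    constructor
    · refine lt_of_le_of_ne h fun h0 => hnoim z.im ?_
      have : I * (z.im : ℂ) = z := by
        apply Complex.ext <;> simp [← h0]
      rw [this]; exact h'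
    · by_contra hcon
      exact hne z (hre z h (not_lt.1 hcon)) h'
  obtain ⟨k, g, hg, hgT, hfac⟩ := exists_factor_finset T hent hx₀
  have hg0 : ∀ s : ℂ, 0 ≤ s.re → g s ≠ 0 := by
    intro s hs h
    refine hgT s ((hmemT s).2 ⟨hs, ?_⟩) h
    rw [hfac, h, mul_zero]
  obtain ⟨l, hl, hle, hlR, hlR'⟩ := exists_axis_log hR hent.continuous hg.continuous hfac hTprop
    hg0 (fun s hs hsR => hre s hs hsR.ge)
  -- `n` is the number of zeros in the right half-plane.
  set n := ∑ z ∈ T, k z with hn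
  have hRpos : 0 < (Δ (I * R)).re := hre _ (by simp) (by simp [abs_of_pos hR])
  have hargR : |Complex.arg (Δ (I * R))| < π / 2 :=
    Complex.abs_arg_lt_pi_div_two_iff.2 (Or.inl hRpos)
  -- Conjugation symmetry: `l (-ω)` and `conj (l ω)` are both logarithms of `Δ (-iω)`, so their
  -- difference has the same value at `0` and at `R`.
  have hl0 : (l 0).im = π * n := by
    have hw := eq_of_exp_eq_one (w := fun ω => l (-ω) - (starRingEnd ℂ) (l ω)) isPreconnected_univ
      (by
        apply Continuous.continuousOn
        exact (hl.comp continuous_neg).sub (Complex.continuous_conj.comp hl))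
      (fun ω _ => by
        rw [Complex.exp_sub, Complex.exp_conj, hle, hle, hconj]
        refine div_self ?_
        rw [← hconj]
        exact hnoim _) (mem_univ 0) (mem_univ R)
    simp only [neg_zero, hlR, hlR', hconj] at hw
    rw [Complex.log_conj _ (by have := abs_lt.1 hargR; linarith [Real.pi_pos])] at hw
    have := congrArg Complex.im hw
    simp at this
    linarith
  have hpolar : ∀ ω, ∃ a : ℝ, 0 < a ∧ M ω = a * Real.cos (l ω).im ∧ S ω = a * Real.sin (l ω).im := by
    intro ω
    refine ⟨Real.exp (l ω).re, Real.exp_pos _, ?_, ?_⟩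
    · rw [hM, ← hle, Complex.exp_re]
    · rw [hS, ← hle, Complex.exp_im]
  have hMan : ∀ x, AnalyticAt ℝ M x := by
    intro x
    have : M = fun ω : ℝ => Complex.reCLM (Δ (I * Complex.ofRealCLM ω)) := funext hM
    rw [this]
    refine (Complex.reCLM.analyticAt _).fun_comp ?_
    refine AnalyticAt.fun_comp (hent.analyticAt _).restrictScalars ?_
    exact analyticAt_const.mul (Complex.ofRealCLM.analyticAt x)
  have hcount := crossing_count (θ := fun ω => (l ω).im) (Complex.continuous_im.comp hl) hpolar hMan
    hR (fun ω hω => by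
      rw [hM]
      have hω' : 0 < ω := hR.trans_le hω
      exact hre _ (by simp) (by simpa [abs_of_pos hω'] using hω))
    (by simp only [hlR, Complex.log_im]; exact hargR) n hl0 m ρ hρdec hρzero hρmult
  rw [← hΓ] at hcount
  have hM0 : M 0 = 1 - ξ - ∫ ν in (0:ℝ)..τ, N ν := by
    rw [hM, hΔ]
    simp
    rw [intervalIntegral.integral_ofReal, Complex.ofReal_re]
  constructor
  · intro hno
    have hT0 : T = ∅ := by
      rw [Finset.eq_empty_iff_forall_notMem]
      intro z hz
      obtain ⟨h, h'⟩ := (hmemT z).1 hz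
      exact hno z h h'
    have hn0 : n = 0 := by rw [hn, hT0, Finset.sum_empty]
    refine ⟨?_, by rw [hcount, hn0]; simp⟩
    obtain ⟨a, ha, h1, -⟩ := hpolar 0
    rw [hl0, hn0, hM0] at h1
    simp at h1
    linarith
  · rintro ⟨-, hΓ0⟩ s hs
    have hn0 : n = 0 := by
      rw [hΓ0] at hcount
      exact_mod_cast hcount.symm
    rw [hn, Finset.sum_eq_zero_iff] at hn0
    rw [hfac, Finset.prod_eq_one fun z hz => by rw [hn0 z hz, pow_zero], one_mul]
    exact hg0 s hs
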